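/- The partial derivatives ∂w/∂y₁ and ∂w/∂y₂ of w (where w(y) = (1−|y|²)/4 for |y| ≤ 1 and w(y) = (1/2)ln(1/|y|) for |y| > 1) are bounded continuous functions on ℝ² and satisfy in the distributional sense ∫_{ℝ²} ∇(∂w/∂y_i)·∇φ = 2 ∫_{|y|=1} (∂w/∂y_i) φ dσ for all φ ∈ C_c^∞(ℝ²). -/

import Mathlib

open Real Metric MeasureTheory

noncomputable abbrev E2 := EuclideanSpace ℝ (Fin 2)

/-- The Laplacian in two variables. -/
noncomputable def lap (f : E2 → ℝ) (x : E2) : ℝ :=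
  ∑ i : Fin 2,
    fderiv ℝ (fun z => fderiv ℝ f z (EuclideanSpace.single i 1)) x (EuclideanSpace.single i 1)

/-- `∂w/∂y_i` for the radial profile `w`: `−y_i/2` for `|y| ≤ 1` and `−y_i/(2|y|²)` else. -/
noncomputable def dw (i : Fin 2) (y : E2) : ℝ :=
  if ‖y‖ ≤ 1 then -(y i) / 2 else -(y i) / (2 * ‖y‖ ^ 2)

/-! On the unit disc `dw i` is the linear function `-y_i / 2`, outside it is `-y_i / (2|y|²)`, the
inversion of the former in the unit circle; both are harmonic and they agree on the circle.
Applying Green's second identity to each of them and the test function `φ`, on the disc and on an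
annulus containing the rest of the support of `φ`, leaves only the integral of `φ` against the jump
of the normal derivative. On the circle the linear function has normal derivative `dw i` and its
inversion has `-dw i`, so the jump is `2 dw i`.

Green's identity comes from the divergence theorem on an annulus, which is the divergence theorem
on a rectangle in polar coordinates. Arclength enters as the Hausdorff measure `μH[1]`; the local
isometry `t ↦ e^{it}` transports it to Lebesgue measure on the angles.
-/

open Set Module InnerProductSpace
open scoped NNReal ENNReal Topology Gradient RealInnerProductSpace Function

section LocalIsometry

lemma hausdorffMeasure_le_of_antilipschitzWith_domRestrict {X Y : Type*} [EMetricSpace X]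
    [MeasurableSpace X] [BorelSpace X] [EMetricSpace Y] [MeasurableSpace Y] [BorelSpace Y]
    {f : X → Y} {s : Set X} {K : ℝ≥0} (hf : AntilipschitzWith K (s.domRestrict f))
    {d : ℝ} (hd : 0 ≤ d) : μH[d] s ≤ (K : ℝ≥0∞) ^ d * μH[d] (f '' s) := by
  have h := hf.le_hausdorffMeasure_image hd univ
  rwa [← isometry_subtype_coe.hausdorffMeasure_image (Or.inl hd), image_univ, Subtype.range_coe,
    image_univ, range_domRestrict] at h

lemma le_of_forall_one_lt_le_rpow_mul {a b : ℝ≥0∞} {d : ℝ}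
    (h : ∀ K : ℝ≥0, 1 < K → a ≤ (K : ℝ≥0∞) ^ d * b) : a ≤ b := by
  have hlim : Filter.Tendsto (fun K : ℝ≥0 => (K : ℝ≥0∞) ^ d * b) (𝓝[>] 1) (𝓝 b) := by
    have hpow : Filter.Tendsto (fun K : ℝ≥0 => (K : ℝ≥0∞) ^ d) (𝓝[>] 1) (𝓝 1) := by
      have hcont : Continuous fun K : ℝ≥0 => (K : ℝ≥0∞) ^ d :=
        ENNReal.continuous_rpow_const.comp ENNReal.continuous_coe
      simpa using (hcont.tendsto 1).mono_left nhdsWithin_le_nhds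
    simpa using ENNReal.Tendsto.mul_const hpow (Or.inl one_ne_zero)
  exact ge_of_tendsto hlim (eventually_mem_nhdsWithin.mono h)

variable {E F : Type*} [NormedAddCommGroup E] [NormedSpace ℝ E]
  [NormedAddCommGroup F] [NormedSpace ℝ F] {f : E → F} {s : Set E}

lemma abs_norm_sub_sub_norm_sub_le_of_approximatesLinearOn {A : E →L[ℝ] F} {c : ℝ≥0}
    (hf : ApproximatesLinearOn f A s c) (hA : ∀ v, ‖A v‖ = ‖v‖) {x y : E} (hx : x ∈ s)
    (hy : y ∈ s) : |‖f x - f y‖ - ‖x - y‖| ≤ c * ‖x - y‖ := by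
  rw [← hA (x - y)]
  exact (abs_norm_sub_norm_le _ _).trans ((hf x hx y hy).trans_eq (by rw [hA]))

lemma lipschitzOnWith_of_approximatesLinearOn {A : E →L[ℝ] F} {K : ℝ≥0} (hK : 1 < K)
    (hf : ApproximatesLinearOn f A s (1 - K⁻¹)) (hA : ∀ v, ‖A v‖ = ‖v‖) :
    LipschitzOnWith K f s := by
  refine LipschitzOnWith.of_dist_le_mul fun x hx y hy => ?_
  have hK₀ : (K : ℝ) ≠ 0 := mod_cast (zero_lt_one.trans hK).ne'
  have h := (abs_le.1 (abs_norm_sub_sub_norm_sub_le_of_approximatesLinearOn hf hA hx hy)).2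
  rw [NNReal.coe_sub (inv_le_one_of_one_le₀ hK.le), NNReal.coe_one, NNReal.coe_inv] at h
  have hKK : 2 - (K : ℝ)⁻¹ ≤ K := by
    field_simp
    linarith [two_mul_le_add_sq (K : ℝ) 1]
  rw [dist_eq_norm, dist_eq_norm]
  linarith [mul_le_mul_of_nonneg_right hKK (norm_nonneg (x - y))]

lemma antilipschitzWith_domRestrict_of_approximatesLinearOn {A : E →L[ℝ] F} {K : ℝ≥0}
    (hK : 1 < K) (hf : ApproximatesLinearOn f A s (1 - K⁻¹)) (hA : ∀ v, ‖A v‖ = ‖v‖) :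
    AntilipschitzWith K (s.domRestrict f) := by
  refine AntilipschitzWith.of_le_mul_dist fun x y => ?_
  have hK' : (0 : ℝ) < K := mod_cast zero_lt_one.trans hK
  have h := (abs_le.1 (abs_norm_sub_sub_norm_sub_le_of_approximatesLinearOn hf hA x.2 y.2)).1
  rw [NNReal.coe_sub (inv_le_one_of_one_le₀ hK.le), NNReal.coe_one, NNReal.coe_inv] at h
  rw [Subtype.dist_eq, dist_eq_norm, dist_eq_norm, ← inv_mul_le_iff₀ hK', domRestrict_apply,
    domRestrict_apply]
  linarith

lemma exists_partition_bilipschitz [FiniteDimensional ℝ E] [SecondCountableTopology F]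
    [MeasurableSpace E] [BorelSpace E] {f' : E → E →L[ℝ] F} (hs : MeasurableSet s)
    (hf : ∀ x ∈ s, HasFDerivWithinAt f (f' x) s x) (hf' : ∀ x ∈ s, ∀ v, ‖f' x v‖ = ‖v‖)
    {K : ℝ≥0} (hK : 1 < K) :
    ∃ t : ℕ → Set E, Pairwise (Disjoint on t) ∧ (∀ n, MeasurableSet (t n)) ∧ ⋃ n, t n = s ∧
      ∀ n, LipschitzOnWith K f (t n) ∧ AntilipschitzWith K ((t n).domRestrict f) := by
  rcases s.eq_empty_or_nonempty with rfl | hne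
  · exact ⟨fun _ => ∅, fun _ _ _ => disjoint_bot_left, fun _ => MeasurableSet.empty, by simp,
      fun _ => ⟨by simp, .of_le_mul_dist (by simp)⟩⟩
  obtain ⟨t, A, hdisj, hmeas, hcover, happrox, hA⟩ :=
    exists_partition_approximatesLinearOn_of_hasFDerivWithinAt f s f' hf (fun _ => 1 - K⁻¹)
      fun _ => (tsub_pos_of_lt (inv_lt_one_of_one_lt₀ hK)).ne'
  have hA' : ∀ n v, ‖A n v‖ = ‖v‖ := fun n v => by
    obtain ⟨y, hy, hAy⟩ := hA hne n
    rw [hAy, hf' y hy]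
  refine ⟨fun n => s ∩ t n, fun m n hmn => (hdisj hmn).mono inter_subset_right inter_subset_right,
    fun n => hs.inter (hmeas n), ?_, fun n => ⟨?_, ?_⟩⟩
  · rw [← inter_iUnion, inter_eq_left.2 hcover]
  · exact lipschitzOnWith_of_approximatesLinearOn hK (happrox n) (hA' n)
  · exact antilipschitzWith_domRestrict_of_approximatesLinearOn hK (happrox n) (hA' n)

-- Cut `s` into pieces on which `f` is `K`-bi-Lipschitz, sum over the pieces, and let `K → 1`.
theorem hausdorffMeasure_image_eq_of_isometric_fderivWithin [FiniteDimensional ℝ E]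
    [SecondCountableTopology F] [MeasurableSpace E] [BorelSpace E] [MeasurableSpace F]
    [BorelSpace F] {f' : E → E →L[ℝ] F} (hs : MeasurableSet s)
    (hf : ∀ x ∈ s, HasFDerivWithinAt f (f' x) s x) (hf' : ∀ x ∈ s, ∀ v, ‖f' x v‖ = ‖v‖)
    (hinj : InjOn f s) {d : ℝ} (hd : 0 ≤ d) : μH[d] (f '' s) = μH[d] s := by
  have : ProperSpace E := FiniteDimensional.proper_real E
  apply le_antisymm <;> refine le_of_forall_one_lt_le_rpow_mul (d := d) fun K hK => ?_
  all_goals obtain ⟨t, hdisj, hmeas, rfl, ht⟩ := exists_partition_bilipschitz hs hf hf' hK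
  · calc μH[d] (f '' ⋃ n, t n)
        ≤ ∑' n, μH[d] (f '' t n) := by rw [image_iUnion]; exact measure_iUnion_le _
      _ ≤ ∑' n, (K : ℝ≥0∞) ^ d * μH[d] (t n) :=
        ENNReal.tsum_le_tsum fun n => (ht n).1.hausdorffMeasure_image_le hd
      _ = (K : ℝ≥0∞) ^ d * μH[d] (⋃ n, t n) := by
        rw [ENNReal.tsum_mul_left, measure_iUnion hdisj hmeas]
  · have hsub : ∀ n, t n ⊆ ⋃ n, t n := subset_iUnion t
    have himage_disj : Pairwise (Disjoint on fun n => f '' t n) := fun m n hmn =>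
      (hdisj hmn).image hinj (hsub m) (hsub n)
    have himage_meas : ∀ n, MeasurableSet (f '' t n) := fun n =>
      (hmeas n).image_of_continuousOn_injOn (ht n).1.continuousOn (hinj.mono (hsub n))
    calc μH[d] (⋃ n, t n)
        = ∑' n, μH[d] (t n) := measure_iUnion hdisj hmeas
      _ ≤ ∑' n, (K : ℝ≥0∞) ^ d * μH[d] (f '' t n) := ENNReal.tsum_le_tsum fun n =>
        hausdorffMeasure_le_of_antilipschitzWith_domRestrict (ht n).2 hd
      _ = (K : ℝ≥0∞) ^ d * μH[d] (f '' ⋃ n, t n) := by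
        rw [ENNReal.tsum_mul_left, image_iUnion, measure_iUnion himage_disj himage_meas]

lemma hausdorffMeasure_restrict_image_eq_map [FiniteDimensional ℝ E]
    [SecondCountableTopology F] [MeasurableSpace E] [BorelSpace E] [MeasurableSpace F]
    [BorelSpace F] {f' : E → E →L[ℝ] F} (hs : MeasurableSet s) (hm : Measurable f)
    (hf : ∀ x ∈ s, HasFDerivWithinAt f (f' x) s x) (hf' : ∀ x ∈ s, ∀ v, ‖f' x v‖ = ‖v‖)
    (hinj : InjOn f s) {d : ℝ} (hd : 0 ≤ d) :
    (μH[d] : Measure F).restrict (f '' s) = ((μH[d] : Measure E).restrict s).map f := by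
  ext B hB
  have hsub : f ⁻¹' B ∩ s ⊆ s := inter_subset_right
  rw [Measure.restrict_apply hB, Measure.map_apply hm hB, Measure.restrict_apply (hm hB),
    ← image_preimage_inter,
    hausdorffMeasure_image_eq_of_isometric_fderivWithin ((hm hB).inter hs)
      (fun x hx => (hf x (hsub hx)).mono hsub) (fun x hx => hf' x (hsub hx)) (hinj.mono hsub) hd]

end LocalIsometry

section PolarCoordinates

/-- The point `e^{it}` of the unit circle, i.e. the outward unit normal of the circle at angle
`t`. -/
noncomputable def unitNormal (t : ℝ) : E2 := !₂[cos t, sin t]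

/-- The counterclockwise unit tangent vector of the unit circle at angle `t`. -/
noncomputable def unitTangent (t : ℝ) : E2 := !₂[-sin t, cos t]

lemma unitNormal_eq_circleMap (t : ℝ) :
    unitNormal t = Complex.orthonormalBasisOneI.repr (circleMap 0 1 t) := by
  ext j
  fin_cases j <;>
    simp [unitNormal, circleMap_zero, Complex.exp_ofReal_mul_I_re, Complex.exp_ofReal_mul_I_im]

lemma norm_unitNormal (t : ℝ) : ‖unitNormal t‖ = 1 := by
  rw [unitNormal_eq_circleMap, LinearIsometryEquiv.norm_map, norm_circleMap_zero, abs_one]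

lemma norm_unitTangent (t : ℝ) : ‖unitTangent t‖ = 1 := by
  simp [unitTangent, EuclideanSpace.norm_eq]

lemma norm_smul_unitNormal {r : ℝ} (hr : 0 ≤ r) (t : ℝ) : ‖r • unitNormal t‖ = r := by
  rw [norm_smul, norm_unitNormal, mul_one, norm_of_nonneg hr]

lemma unitNormal_neg_pi : unitNormal (-π) = unitNormal π := by simp [unitNormal]

lemma unitTangent_neg_pi : unitTangent (-π) = unitTangent π := by simp [unitTangent]

lemma hasDerivAt_finTwo_toLp {x y : ℝ → ℝ} {x' y' t : ℝ} (hx : HasDerivAt x x' t)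
    (hy : HasDerivAt y y' t) : HasDerivAt (fun s => (!₂[x s, y s] : E2)) !₂[x', y'] t := by
  refine (PiLp.hasFDerivAt_toLp (𝕜 := ℝ) 2 ![x t, y t]).comp_hasDerivAt t
    (f := fun s => ![x s, y s]) (f' := ![x', y']) (hasDerivAt_pi.2 fun j => ?_)
  fin_cases j
  exacts [hx, hy]

lemma hasDerivAt_unitNormal (t : ℝ) : HasDerivAt unitNormal (unitTangent t) t :=
  hasDerivAt_finTwo_toLp (hasDerivAt_cos t) (hasDerivAt_sin t)

lemma hasDerivAt_unitTangent (t : ℝ) : HasDerivAt unitTangent (-unitNormal t) t := by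
  convert! hasDerivAt_finTwo_toLp (hasDerivAt_sin t).neg (hasDerivAt_cos t) using 1
  ext j
  fin_cases j <;> simp [unitNormal]

lemma continuous_unitNormal : Continuous unitNormal :=
  continuous_iff_continuousAt.2 fun t => (hasDerivAt_unitNormal t).continuousAt

lemma injOn_unitNormal : InjOn unitNormal (Ioc (-π) π) := by
  have h : InjOn (circleMap 0 1) (Ioc (-π) π) := by
    rw [← uIoc_of_le (by linarith [pi_pos])]
    exact injOn_circleMap_of_abs_sub_le one_ne_zero
      (by rw [abs_of_neg (by linarith [pi_pos])]; linarith)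
  rw [funext unitNormal_eq_circleMap]
  exact Complex.orthonormalBasisOneI.repr.injective.comp_injOn h

lemma image_unitNormal : unitNormal '' Ioc (-π) π = sphere 0 1 := by
  have h := (periodic_circleMap 0 1).image_Ioc two_pi_pos (-π)
  rw [range_circleMap, abs_one, show -π + 2 * π = π by ring] at h
  rw [funext unitNormal_eq_circleMap, ← Function.comp_def, image_comp, h,
    LinearIsometryEquiv.image_sphere, map_zero]

lemma integral_sphere_hausdorffMeasure {F : Type*} [NormedAddCommGroup F] [NormedSpace ℝ F]
    {f : E2 → F} (hf : Continuous f) :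
    ∫ y in sphere (0 : E2) 1, f y ∂μH[1] = ∫ t in (-π)..π, f (unitNormal t) := by
  have hmap : (μH[1] : Measure E2).restrict (sphere 0 1) =
      (volume.restrict (Ioc (-π) π)).map unitNormal := by
    rw [← image_unitNormal, ← hausdorffMeasure_real]
    exact hausdorffMeasure_restrict_image_eq_map measurableSet_Ioc continuous_unitNormal.measurable
      (fun t _ => (hasDerivAt_unitNormal t).hasFDerivAt.hasFDerivWithinAt)
      (fun t _ v => by simp [norm_smul, norm_unitTangent]) injOn_unitNormal zero_le_one
  rw [hmap, integral_map continuous_unitNormal.aemeasurable hf.aestronglyMeasurable,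
    intervalIntegral.integral_of_le (by linarith [pi_pos])]

lemma integral_eq_integral_polar (f : E2 → ℝ) :
    ∫ y, f y = ∫ p in Ioi (0 : ℝ) ×ˢ Ioo (-π) π, p.1 * f (p.1 • unitNormal p.2) := by
  have hpolar (p : ℝ × ℝ) : Complex.orthonormalBasisOneI.repr (Complex.polarCoord.symm p) =
      p.1 • unitNormal p.2 := by
    rw [Complex.polarCoord_symm_apply, unitNormal_eq_circleMap, ← map_smul]
    congr 1
    simp [circleMap_zero, Complex.exp_mul_I, mul_add]
  rw [← Complex.orthonormalBasisOneI.repr.measurePreserving.integral_comp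
    Complex.orthonormalBasisOneI.repr.toHomeomorph.measurableEmbedding,
    ← Complex.integral_comp_polarCoord_symm]
  simp only [hpolar, smul_eq_mul, polarCoord_target]

lemma setIntegral_annulus_eq_integral_polar {a b : ℝ} (ha : 0 ≤ a) (hab : a ≤ b) {f : E2 → ℝ}
    (hf : ContinuousOn f (norm ⁻¹' Icc a b)) :
    ∫ y in norm ⁻¹' Ioc a b, f y =
      ∫ r in a..b, ∫ t in (-π)..π, r * f (r • unitNormal t) := by
  have hpi : -π ≤ π := by linarith [pi_pos]
  have hcont : ContinuousOn (fun p : ℝ × ℝ => p.1 * f (p.1 • unitNormal p.2))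
      (Icc a b ×ˢ Icc (-π) π) :=
    continuousOn_fst.mul <| hf.comp
      (continuous_fst.smul (continuous_unitNormal.comp continuous_snd)).continuousOn
      fun p hp => by rw [mem_preimage, norm_smul_unitNormal (ha.trans hp.1.1)]; exact hp.1
  rw [← integral_indicator (measurableSet_Ioc.preimage measurable_norm),
    integral_eq_integral_polar]
  calc ∫ p in Ioi (0 : ℝ) ×ˢ Ioo (-π) π,
        p.1 * (norm ⁻¹' Ioc a b).indicator f (p.1 • unitNormal p.2)
      = ∫ p in Ioi (0 : ℝ) ×ˢ Ioo (-π) π, (Ioc a b ×ˢ univ).indicator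
          (fun p => p.1 * f (p.1 • unitNormal p.2)) p := by
        refine setIntegral_congr_fun (measurableSet_Ioi.prod measurableSet_Ioo) fun p hp => ?_
        simp [indicator, norm_smul_unitNormal (le_of_lt hp.1)]
    _ = ∫ p in Ioc a b ×ˢ Ioo (-π) π, p.1 * f (p.1 • unitNormal p.2) := by
        rw [setIntegral_indicator (measurableSet_Ioc.prod .univ), prod_inter_prod, inter_univ,
          inter_eq_right.2 (Ioc_subset_Ioi_self.trans (Ioi_subset_Ioi ha))]
    _ = ∫ r in a..b, ∫ t in (-π)..π, r * f (r • unitNormal t) := by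
        rw [Measure.volume_eq_prod, setIntegral_prod]
        · simp_rw [intervalIntegral.integral_of_le hab, intervalIntegral.integral_of_le hpi,
            integral_Ioc_eq_integral_Ioo (x := -π)]
        · exact (hcont.integrableOn_compact (isCompact_Icc.prod isCompact_Icc)).mono_set
            (prod_mono Ioc_subset_Icc_self Ioo_subset_Icc_self)

end PolarCoordinates

section Divergence

variable {E : Type*} [NormedAddCommGroup E]

/-- The divergence of a vector field `X`, defined without coordinates as the trace of its
derivative. -/
noncomputable def divergence [NormedSpace ℝ E] (X : E → E) (x : E) : ℝ :=
  LinearMap.trace ℝ E (fderiv ℝ X x)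

lemma continuousAt_divergence [NormedSpace ℝ E] [FiniteDimensional ℝ E] {X : E → E}
    {x : E} (hX : ContDiffAt ℝ 1 X x) : ContinuousAt (divergence X) x :=
  (LinearMap.continuous_of_finiteDimensional
    (LinearMap.trace ℝ E ∘ₗ ContinuousLinearMap.coeLM ℝ)).continuousAt.comp
    (hX.continuousAt_fderiv one_ne_zero)

lemma divergence_const [NormedSpace ℝ E] (c x : E) : divergence (fun _ => c) x = 0 := by
  simp [divergence]

lemma divergence_id [NormedSpace ℝ E] [FiniteDimensional ℝ E] (x : E) :
    divergence (fun y => y) x = finrank ℝ E := by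
  simp [divergence]

lemma divergence_sub [NormedSpace ℝ E] {X Y : E → E} {x : E} (hX : DifferentiableAt ℝ X x)
    (hY : DifferentiableAt ℝ Y x) :
    divergence (fun y => X y - Y y) x = divergence X x - divergence Y x := by
  simp only [divergence, fderiv_fun_sub hX hY, ContinuousLinearMap.toLinearMap_sub, map_sub]

lemma divergence_smul [InnerProductSpace ℝ E] [FiniteDimensional ℝ E] {u : E → ℝ} {X : E → E}
    {x : E} (hu : DifferentiableAt ℝ u x) (hX : DifferentiableAt ℝ X x) :
    divergence (fun y => u y • X y) x = u x * divergence X x + ⟪∇ u x, X x⟫ := by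
  simp only [divergence, fderiv_fun_smul hu hX, ContinuousLinearMap.toLinearMap_add, map_add,
    ContinuousLinearMap.toLinearMap_smul, map_smul, smul_eq_mul, inner_gradient_left]
  exact congrArg _ (LinearMap.trace_smulRight (fderiv ℝ u x).toLinearMap (X x))

lemma contDiffAt_gradient [InnerProductSpace ℝ E] [CompleteSpace E] {u : E → ℝ} {x : E}
    {m n : WithTop ℕ∞} (hu : ContDiffAt ℝ n u x) (hmn : m + 1 ≤ n) : ContDiffAt ℝ m (∇ u) x :=
  (toDual ℝ E).symm.contDiff.contDiffAt.comp x (hu.fderiv_right hmn)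

lemma contDiffAt_smul_gradient_sub_smul_gradient [InnerProductSpace ℝ E] [CompleteSpace E]
    {u v : E → ℝ} {x : E} (hu : ContDiffAt ℝ 2 u x) (hv : ContDiffAt ℝ 2 v x) :
    ContDiffAt ℝ 1 (fun y => u y • ∇ v y - v y • ∇ u y) x :=
  ((hu.of_le one_le_two).smul (contDiffAt_gradient hv one_add_one_eq_two.le)).sub
    ((hv.of_le one_le_two).smul (contDiffAt_gradient hu one_add_one_eq_two.le))

lemma lap_eq_divergence_gradient {u : E2 → ℝ} {x : E2} (hu : DifferentiableAt ℝ (∇ u) x) :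
    lap u x = divergence (∇ u) x := by
  rw [divergence, LinearMap.trace_eq_sum_inner _ (EuclideanSpace.basisFun (Fin 2) ℝ), lap]
  refine Finset.sum_congr rfl fun j _ => ?_
  simp only [← inner_gradient_left (f := u), EuclideanSpace.basisFun_apply]
  rw [fderiv_inner_apply ℝ hu (differentiableAt_const _), fderiv_const_apply,
    zero_apply, inner_zero_right, zero_add, real_inner_comm, ContinuousLinearMap.coe_coe]

lemma divergence_smul_gradient_sub_smul_gradient {u v : E2 → ℝ} {x : E2}
    (hu : ContDiffAt ℝ 2 u x) (hv : ContDiffAt ℝ 2 v x) :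
    divergence (fun y => u y • ∇ v y - v y • ∇ u y) x = u x * lap v x - v x * lap u x := by
  have hu₁ := hu.differentiableAt two_ne_zero
  have hv₁ := hv.differentiableAt two_ne_zero
  have hu₂ := (contDiffAt_gradient hu one_add_one_eq_two.le).differentiableAt one_ne_zero
  have hv₂ := (contDiffAt_gradient hv one_add_one_eq_two.le).differentiableAt one_ne_zero
  rw [divergence_sub (hu₁.fun_smul hv₂) (hv₁.fun_smul hu₂), divergence_smul hu₁ hv₂,
    divergence_smul hv₁ hu₂, lap_eq_divergence_gradient hu₂, lap_eq_divergence_gradient hv₂,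
    real_inner_comm]
  ring

end Divergence

section Flux

/-- The outward flux `∫_{|y| = r} X · n dσ` of a vector field through the circle of radius `r`
about the origin, written in the angular parameter. -/
noncomputable def flux (X : E2 → E2) (r : ℝ) : ℝ :=
  ∫ t in (-π)..π, r * ⟪X (r • unitNormal t), unitNormal t⟫

lemma flux_zero_right (X : E2 → E2) : flux X 0 = 0 := by simp [flux]

lemma flux_congr {X Y : E2 → E2} {r : ℝ} (hr : 0 ≤ r) (h : ∀ y, ‖y‖ = r → X y = Y y) :
    flux X r = flux Y r := by
  simp only [flux, h _ (norm_smul_unitNormal hr _)]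

lemma intervalIntegrable_flux {X : E2 → E2} {r : ℝ} (hr : 0 ≤ r)
    (hX : ContinuousOn X (sphere 0 r)) :
    IntervalIntegrable (fun t => r * ⟪X (r • unitNormal t), unitNormal t⟫) volume (-π) π := by
  refine Continuous.intervalIntegrable (continuous_const.mul (.inner ?_ continuous_unitNormal)) _ _
  exact hX.comp_continuous (continuous_unitNormal.const_smul r) fun t => by
    rw [mem_sphere_zero_iff_norm, norm_smul_unitNormal hr]

lemma flux_sub {X Y : E2 → E2} {r : ℝ} (hr : 0 ≤ r) (hX : ContinuousOn X (sphere 0 r))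
    (hY : ContinuousOn Y (sphere 0 r)) :
    flux (fun y => X y - Y y) r = flux X r - flux Y r := by
  simp only [flux, inner_sub_left, mul_sub]
  exact intervalIntegral.integral_sub (intervalIntegrable_flux hr hX)
    (intervalIntegrable_flux hr hY)

lemma trace_eq_inner_unitNormal_add_inner_unitTangent (A : E2 →ₗ[ℝ] E2) (t : ℝ) :
    LinearMap.trace ℝ E2 A =
      ⟪A (unitNormal t), unitNormal t⟫ + ⟪A (unitTangent t), unitTangent t⟫ := by
  have hn : unitNormal t =
      cos t • EuclideanSpace.single 0 1 + sin t • EuclideanSpace.single 1 1 := by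
    ext j; fin_cases j <;> simp [unitNormal]
  have hτ : unitTangent t =
      -sin t • EuclideanSpace.single 0 1 + cos t • EuclideanSpace.single 1 1 := by
    ext j; fin_cases j <;> simp [unitTangent]
  rw [LinearMap.trace_eq_sum_inner _ (EuclideanSpace.basisFun (Fin 2) ℝ), hn, hτ]
  simp only [EuclideanSpace.basisFun_apply, Fin.sum_univ_two, map_add, map_smul, inner_add_left,
    inner_add_right, inner_smul_left, inner_smul_right, EuclideanSpace.inner_single_left,
    EuclideanSpace.inner_single_right, conj_trivial]
  linear_combination
    -(A (EuclideanSpace.single 0 1) 0 + A (EuclideanSpace.single 1 1) 1) * sin_sq_add_cos_sq t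

lemma hasFDerivAt_smul_unitNormal (p : ℝ × ℝ) :
    HasFDerivAt (fun p : ℝ × ℝ => p.1 • unitNormal p.2)
      (p.1 • (ContinuousLinearMap.toSpanSingleton ℝ (unitTangent p.2) ∘L .snd ℝ ℝ ℝ) +
        (ContinuousLinearMap.fst ℝ ℝ ℝ).smulRight (unitNormal p.2)) p :=
  hasFDerivAt_fst.fun_smul ((hasDerivAt_unitNormal p.2).hasFDerivAt.comp p hasFDerivAt_snd)

lemma exists_hasFDerivAt_polar_divergence {X : E2 → E2} {p : ℝ × ℝ}
    (hX : DifferentiableAt ℝ X (p.1 • unitNormal p.2)) :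
    ∃ F' G' : ℝ × ℝ →L[ℝ] ℝ,
      HasFDerivAt (fun q : ℝ × ℝ => q.1 * ⟪X (q.1 • unitNormal q.2), unitNormal q.2⟫) F' p ∧
      HasFDerivAt (fun q : ℝ × ℝ => ⟪X (q.1 • unitNormal q.2), unitTangent q.2⟫) G' p ∧
      F' (1, 0) + G' (0, 1) = p.1 * divergence X (p.1 • unitNormal p.2) := by
  have hXpolar := hX.hasFDerivAt.comp p (hasFDerivAt_smul_unitNormal p)
  have hn := (hasDerivAt_unitNormal p.2).hasFDerivAt.comp p hasFDerivAt_snd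
  have hτ := (hasDerivAt_unitTangent p.2).hasFDerivAt.comp p hasFDerivAt_snd
  refine ⟨_, _, hasFDerivAt_fst.mul (hXpolar.inner ℝ hn), hXpolar.inner ℝ hτ, ?_⟩
  set x := p.1 • unitNormal p.2 with hx
  calc _ = (p.1 * ⟪fderiv ℝ X x (unitNormal p.2), unitNormal p.2⟫ + ⟪X x, unitNormal p.2⟫) +
        (p.1 * ⟪fderiv ℝ X x (unitTangent p.2), unitTangent p.2⟫ - ⟪X x, unitNormal p.2⟫) := by
        simp [inner_smul_left, ← hx, sub_eq_neg_add]
    _ = p.1 * divergence X x := by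
        rw [divergence, trace_eq_inner_unitNormal_add_inner_unitTangent _ p.2]
        simp only [ContinuousLinearMap.coe_coe]
        ring

theorem setIntegral_divergence_annulus {a b : ℝ} (ha : 0 ≤ a) (hab : a ≤ b) {X : E2 → E2}
    (hX : ∀ y, ‖y‖ ∈ Icc a b → ContDiffAt ℝ 1 X y) :
    ∫ y in norm ⁻¹' Ioc a b, divergence X y = flux X b - flux X a := by
  have hpi : -π ≤ π := by linarith [pi_pos]
  have hXpolar : ∀ p ∈ Icc a b ×ˢ Icc (-π) π, ContDiffAt ℝ 1 X (p.1 • unitNormal p.2) :=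
    fun p hp => hX _ (by rw [norm_smul_unitNormal (ha.trans hp.1.1)]; exact hp.1)
  choose! F' G' hF' hG' hdiv using fun p hp =>
    exists_hasFDerivAt_polar_divergence ((hXpolar p hp).differentiableAt one_ne_zero)
  have hsub : Ioo a b ×ˢ Ioo (-π) π ⊆ Icc a b ×ˢ Icc (-π) π :=
    prod_mono Ioo_subset_Icc_self Ioo_subset_Icc_self
  have hdiv_cont : ContinuousOn (fun p : ℝ × ℝ => p.1 * divergence X (p.1 • unitNormal p.2))
      (Icc a b ×ˢ Icc (-π) π) := fun p hp =>
    (continuousAt_fst.mul ((continuousAt_divergence (hXpolar p hp)).comp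
      (f := fun p : ℝ × ℝ => p.1 • unitNormal p.2)
      (hasFDerivAt_smul_unitNormal p).continuousAt)).continuousWithinAt
  have hint : IntegrableOn (fun p => F' p (1, 0) + G' p (0, 1)) (Icc a b ×ˢ Icc (-π) π) :=
    (hdiv_cont.integrableOn_compact (isCompact_Icc.prod isCompact_Icc)).congr_fun
      (fun p hp => (hdiv p hp).symm) (measurableSet_Icc.prod measurableSet_Icc)
  have hgreen := integral2_divergence_prod_of_hasFDerivAt_off_countable
    (fun q : ℝ × ℝ => q.1 * ⟪X (q.1 • unitNormal q.2), unitNormal q.2⟫)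
    (fun q : ℝ × ℝ => ⟪X (q.1 • unitNormal q.2), unitTangent q.2⟫) F' G' a (-π) b π ∅
    countable_empty
  -- `X` is periodic in the angle, so the edges `t = ±π` contribute nothing.
  simp only [uIcc_of_le hab, uIcc_of_le hpi, min_eq_left hab, max_eq_right hab, min_eq_left hpi,
    max_eq_right hpi, sdiff_empty, unitNormal_neg_pi, unitTangent_neg_pi, sub_self, zero_add]
    at hgreen
  rw [setIntegral_annulus_eq_integral_polar ha hab
    fun y hy => (continuousAt_divergence (hX y hy)).continuousWithinAt]
  calc ∫ r in a..b, ∫ t in (-π)..π, r * divergence X (r • unitNormal t)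
      = ∫ r in a..b, ∫ t in (-π)..π, F' (r, t) (1, 0) + G' (r, t) (0, 1) :=
        intervalIntegral.integral_congr fun r hr => intervalIntegral.integral_congr fun t ht =>
          (hdiv (r, t) ⟨uIcc_of_le hab ▸ hr, uIcc_of_le hpi ▸ ht⟩).symm
    _ = flux X b - flux X a := hgreen
        (fun p hp => (hF' p hp).continuousAt.continuousWithinAt)
        (fun p hp => (hG' p hp).continuousAt.continuousWithinAt)
        (fun p hp => hF' p (hsub hp)) (fun p hp => hG' p (hsub hp)) hint

theorem setIntegral_annulus_mul_lap_sub_mul_lap {a b : ℝ} (ha : 0 ≤ a) (hab : a ≤ b)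
    {u v : E2 → ℝ} (hu : ∀ y, ‖y‖ ∈ Icc a b → ContDiffAt ℝ 2 u y)
    (hv : ∀ y, ‖y‖ ∈ Icc a b → ContDiffAt ℝ 2 v y) :
    ∫ y in norm ⁻¹' Ioc a b, (u y * lap v y - v y * lap u y) =
      flux (fun y => u y • ∇ v y - v y • ∇ u y) b -
        flux (fun y => u y • ∇ v y - v y • ∇ u y) a := by
  rw [← setIntegral_divergence_annulus ha hab fun y hy =>
    contDiffAt_smul_gradient_sub_smul_gradient (hu y hy) (hv y hy)]
  refine setIntegral_congr_fun (measurableSet_Ioc.preimage measurable_norm) fun y hy => ?_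
  have hy' := Ioc_subset_Icc_self hy
  exact (divergence_smul_gradient_sub_smul_gradient (hu y hy') (hv y hy')).symm

end Flux

section Jump

lemma continuous_lap {φ : E2 → ℝ} (hφ : ContDiff ℝ 2 φ) : Continuous (lap φ) := by
  have hgrad (x : E2) : ContDiffAt ℝ 1 (∇ φ) x :=
    contDiffAt_gradient hφ.contDiffAt one_add_one_eq_two.le
  rw [show lap φ = divergence (∇ φ) from funext fun x =>
    lap_eq_divergence_gradient ((hgrad x).differentiableAt one_ne_zero)]
  exact continuous_iff_continuousAt.2 fun x => continuousAt_divergence (hgrad x)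

lemma lap_eq_zero_of_notMem_tsupport {φ : E2 → ℝ} {x : E2} (hx : x ∉ tsupport φ) :
    lap φ x = 0 := by
  have hφ : fderiv ℝ φ =ᶠ[𝓝 x] fun _ => 0 := by
    simpa [Pi.zero_def] using! (notMem_tsupport_iff_eventuallyEq.1 hx).fderiv (𝕜 := ℝ)
  refine Finset.sum_eq_zero fun j _ => ?_
  have hpd : (fun z => fderiv ℝ φ z (EuclideanSpace.single j 1)) =ᶠ[𝓝 x] fun _ => 0 :=
    hφ.mono fun z hz => by simp only [hz, zero_apply]
  rw [hpd.fderiv_eq, fderiv_const_apply, zero_apply]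

lemma gradient_eq_zero_of_notMem_tsupport {E : Type*} [NormedAddCommGroup E]
    [InnerProductSpace ℝ E] [CompleteSpace E] {φ : E → ℝ} {x : E} (hx : x ∉ tsupport φ) :
    ∇ φ x = 0 := by
  rw [(notMem_tsupport_iff_eventuallyEq.1 hx).gradient_eq, Pi.zero_def, gradient_fun_const]

lemma setIntegral_annulus_zero_eq_integral {E F : Type*} [NormedAddCommGroup E]
    [MeasurableSpace E] [NormedAddCommGroup F] [NormedSpace ℝ F] {μ : Measure E}
    [NullSingletonClass μ] {f : E → F} {R : ℝ} (hf : ∀ y, R < ‖y‖ → f y = 0) :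
    ∫ y in norm ⁻¹' Ioc 0 R, f y ∂μ = ∫ y, f y ∂μ := by
  refine setIntegral_eq_integral_of_ae_compl_eq_zero ?_
  filter_upwards [Measure.ae_ne μ 0] with y hy hyR
  exact hf y (not_le.1 fun h => hyR ⟨norm_pos_iff.2 hy, h⟩)

lemma integrableOn_annulus {E F : Type*} [NormedAddCommGroup E] [ProperSpace E]
    [MeasurableSpace E] [OpensMeasurableSpace E] [NormedAddCommGroup F] {μ : Measure E}
    [IsFiniteMeasureOnCompacts μ] {f : E → F} {a b : ℝ}
    (hf : ContinuousOn f (norm ⁻¹' Icc a b)) : IntegrableOn f (norm ⁻¹' Ioc a b) μ := by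
  have hcompact : IsCompact (norm ⁻¹' Icc a b : Set E) :=
    (isCompact_closedBall 0 b).of_isClosed_subset (isClosed_Icc.preimage continuous_norm)
      fun y hy => mem_closedBall_zero_iff.2 hy.2
  exact (hf.integrableOn_compact hcompact).mono_set (preimage_mono Ioc_subset_Icc_self)

lemma integral_ite_norm_le_mul {E : Type*} [NormedAddCommGroup E] [ProperSpace E]
    [MeasurableSpace E] [OpensMeasurableSpace E] {μ : Measure E} [IsFiniteMeasureOnCompacts μ]
    [NullSingletonClass μ] {ρ R : ℝ} (hρ : 0 ≤ ρ) (hR : ρ ≤ R) {u v f : E → ℝ}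
    (hu : ContinuousOn u (norm ⁻¹' Icc 0 ρ)) (hv : ContinuousOn v (norm ⁻¹' Icc ρ R))
    (hf : Continuous f) (hfR : ∀ y, R < ‖y‖ → f y = 0) :
    ∫ y, (if ‖y‖ ≤ ρ then u y else v y) * f y ∂μ =
      (∫ y in norm ⁻¹' Ioc 0 ρ, u y * f y ∂μ) + ∫ y in norm ⁻¹' Ioc ρ R, v y * f y ∂μ := by
  have hmeas (a b : ℝ) : MeasurableSet (norm ⁻¹' Ioc a b : Set E) :=
    measurableSet_Ioc.preimage measurable_norm
  have hinner : EqOn (fun y => u y * f y) (fun y => (if ‖y‖ ≤ ρ then u y else v y) * f y)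
      (norm ⁻¹' Ioc 0 ρ) := fun y hy => by simp only [if_pos hy.2]
  have houter : EqOn (fun y => v y * f y) (fun y => (if ‖y‖ ≤ ρ then u y else v y) * f y)
      (norm ⁻¹' Ioc ρ R) := fun y hy => by simp only [if_neg (not_le.2 hy.1)]
  rw [setIntegral_congr_fun (hmeas 0 ρ) hinner, setIntegral_congr_fun (hmeas ρ R) houter,
    ← setIntegral_union ((Ioc_disjoint_Ioc_of_le le_rfl).preimage _) (hmeas ρ R)
      ((integrableOn_annulus (hu.mul hf.continuousOn)).congr_fun hinner (hmeas 0 ρ))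
      ((integrableOn_annulus (hv.mul hf.continuousOn)).congr_fun houter (hmeas ρ R)),
    ← preimage_union, Ioc_union_Ioc_eq_Ioc hρ hR,
    setIntegral_annulus_zero_eq_integral fun y hy => by rw [hfR y hy, mul_zero]]

lemma setIntegral_annulus_mul_lap_of_lap_eq_zero {a b : ℝ} (ha : 0 ≤ a) (hab : a ≤ b)
    {u φ : E2 → ℝ} (hu : ∀ y, ‖y‖ ∈ Icc a b → ContDiffAt ℝ 2 u y)
    (hlap : ∀ y, ‖y‖ ∈ Icc a b → lap u y = 0) (hφ : ContDiff ℝ 2 φ) :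
    ∫ y in norm ⁻¹' Ioc a b, u y * lap φ y =
      flux (fun y => u y • ∇ φ y - φ y • ∇ u y) b -
        flux (fun y => u y • ∇ φ y - φ y • ∇ u y) a := by
  rw [← setIntegral_annulus_mul_lap_sub_mul_lap ha hab hu fun _ _ => hφ.contDiffAt]
  refine setIntegral_congr_fun (measurableSet_Ioc.preimage measurable_norm) fun y hy => ?_
  simp only [hlap y (Ioc_subset_Icc_self hy), mul_zero, sub_zero]

theorem neg_integral_ite_norm_le_mul_lap {ρ : ℝ} (hρ : 0 ≤ ρ) {u v φ : E2 → ℝ}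
    (hu : ∀ y, ‖y‖ ≤ ρ → ContDiffAt ℝ 2 u y) (hlap_u : ∀ y, ‖y‖ ≤ ρ → lap u y = 0)
    (hv : ∀ y, ρ ≤ ‖y‖ → ContDiffAt ℝ 2 v y) (hlap_v : ∀ y, ρ ≤ ‖y‖ → lap v y = 0)
    (huv : ∀ y, ‖y‖ = ρ → u y = v y) (hφ : ContDiff ℝ 2 φ) (hφc : HasCompactSupport φ) :
    -(∫ y, (if ‖y‖ ≤ ρ then u y else v y) * lap φ y) =
      flux (fun y => φ y • (∇ u y - ∇ v y)) ρ := by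
  obtain ⟨R, hρR, hR⟩ := hφc.isCompact.isBounded.subset_ball_lt ρ 0
  have hout : ∀ y, R ≤ ‖y‖ → y ∉ tsupport φ := fun y hy hmem =>
    hy.not_gt (mem_ball_zero_iff.1 (hR hmem))
  have hflux_R : flux (fun y => v y • ∇ φ y - φ y • ∇ v y) R = 0 := by
    rw [flux_congr (Y := fun _ => 0) (hρ.trans hρR.le) fun y hy => ?_]
    · simp [flux]
    · rw [gradient_eq_zero_of_notMem_tsupport (hout y hy.ge),
        image_eq_zero_of_notMem_tsupport (hout y hy.ge), smul_zero, zero_smul, sub_zero]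
  have hcont {f : E2 → ℝ} (hf : ∀ y, ‖y‖ = ρ → ContDiffAt ℝ 2 f y) :
      ContinuousOn (fun y => f y • ∇ φ y - φ y • ∇ f y) (sphere 0 ρ) := fun y hy =>
    (contDiffAt_smul_gradient_sub_smul_gradient (hf y (mem_sphere_zero_iff_norm.1 hy))
      hφ.contDiffAt).continuousAt.continuousWithinAt
  calc -(∫ y, (if ‖y‖ ≤ ρ then u y else v y) * lap φ y)
      = flux (fun y => v y • ∇ φ y - φ y • ∇ v y) ρ -
          flux (fun y => u y • ∇ φ y - φ y • ∇ u y) ρ := by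
        rw [integral_ite_norm_le_mul hρ hρR.le
            (fun y hy => (hu y hy.2).continuousAt.continuousWithinAt)
            (fun y hy => (hv y hy.1).continuousAt.continuousWithinAt) (continuous_lap hφ)
            (fun y hy => lap_eq_zero_of_notMem_tsupport (hout y hy.le)),
          setIntegral_annulus_mul_lap_of_lap_eq_zero le_rfl hρ (fun y hy => hu y hy.2)
            (fun y hy => hlap_u y hy.2) hφ,
          setIntegral_annulus_mul_lap_of_lap_eq_zero hρ hρR.le (fun y hy => hv y hy.1)
            (fun y hy => hlap_v y hy.1) hφ, flux_zero_right, hflux_R]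
        ring
    _ = flux (fun y => (v y • ∇ φ y - φ y • ∇ v y) - (u y • ∇ φ y - φ y • ∇ u y)) ρ :=
        (flux_sub hρ (hcont fun y hy => hv y hy.ge) (hcont fun y hy => hu y hy.le)).symm
    _ = flux (fun y => φ y • (∇ u y - ∇ v y)) ρ :=
        flux_congr hρ fun y hy => by rw [huv y hy]; module

end Jump

section Profile

variable {E : Type*} [NormedAddCommGroup E] [InnerProductSpace ℝ E] [CompleteSpace E]

lemma inner_gradient_self_of_homogeneous {f : E → ℝ} {x : E} {k : ℤ}
    (hf : DifferentiableAt ℝ f x) (hk : ∀ s : ℝ, 0 < s → f (s • x) = s ^ k * f x) :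
    ⟪∇ f x, x⟫ = k * f x := by
  have hray : HasDerivAt (fun s : ℝ => f (s • x)) (fderiv ℝ f x x) 1 := by
    have hf' : HasFDerivAt f (fderiv ℝ f x) ((1 : ℝ) • x) := by rw [one_smul]; exact hf.hasFDerivAt
    simpa using! hf'.comp_hasDerivAt (1 : ℝ) ((hasDerivAt_id (1 : ℝ)).smul_const x)
  have hpow : HasDerivAt (fun s : ℝ => s ^ k * f x) (k * f x) 1 := by
    simpa using (hasDerivAt_zpow k (1 : ℝ) (Or.inl one_ne_zero)).mul_const (f x)
  rw [inner_gradient_left]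
  exact hray.unique (hpow.congr_of_eventuallyEq ((lt_mem_nhds one_pos).mono hk))

lemma hasGradientAt_mul {f g : E → ℝ} {f' g' x : E} (hf : HasGradientAt f f' x)
    (hg : HasGradientAt g g' x) :
    HasGradientAt (fun y => f y * g y) (f x • g' + g x • f') x := by
  rw [hasGradientAt_iff_hasFDerivAt] at hf hg ⊢
  simpa using! hf.mul hg

lemma hasGradientAt_inv_two_mul_norm_sq {x : E} (hx : x ≠ 0) :
    HasGradientAt (fun y : E => (2 * ‖y‖ ^ 2)⁻¹) (-(‖x‖ ^ 4)⁻¹ • x) x := by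
  rw [hasGradientAt_iff_hasFDerivAt]
  have hx' : ‖x‖ ≠ 0 := norm_ne_zero_iff.2 hx
  have h := (hasDerivAt_inv (by positivity : 2 * ‖x‖ ^ 2 ≠ 0)).comp_hasFDerivAt x
    ((hasStrictFDerivAt_norm_sq x).hasFDerivAt.const_mul 2)
  convert! h using 1
  ext v
  simp only [neg_smul, map_neg, map_smul, neg_apply, smul_apply, toDual_apply_apply, smul_eq_mul,
    coe_innerSL_apply, nsmul_eq_mul, Nat.cast_ofNat, neg_inj]
  field_simp

lemma hasGradientAt_coord {ι : Type*} [Fintype ι] [DecidableEq ι] (i : ι)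
    (x : EuclideanSpace ℝ ι) :
    HasGradientAt (fun y : EuclideanSpace ℝ ι => y i) (EuclideanSpace.single i 1) x := by
  rw [hasGradientAt_iff_hasFDerivAt]
  convert! PiLp.hasFDerivAt_apply (𝕜 := ℝ) 2 x i using 1
  ext v
  simp [EuclideanSpace.inner_single_left]

lemma hasGradientAt_neg_coord_div_two {ι : Type*} [Fintype ι] [DecidableEq ι] (i : ι)
    (x : EuclideanSpace ℝ ι) :
    HasGradientAt (fun y : EuclideanSpace ℝ ι => -(y i) / 2)
      ((-1 / 2 : ℝ) • EuclideanSpace.single i 1) x := by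
  simpa [div_eq_mul_inv, mul_comm] using
    hasGradientAt_mul (hasGradientAt_const x (-1 / 2 : ℝ)) (hasGradientAt_coord i x)

lemma lap_neg_coord_div_two (i : Fin 2) (x : E2) : lap (fun y : E2 => -(y i) / 2) x = 0 := by
  have hgrad := gradient_eq (hasGradientAt_neg_coord_div_two i)
  rw [lap_eq_divergence_gradient (by rw [hgrad]; exact differentiableAt_const _), hgrad,
    divergence_const]

lemma hasGradientAt_neg_coord_div_norm_sq {ι : Type*} [Fintype ι] [DecidableEq ι] (i : ι)
    {x : EuclideanSpace ℝ ι} (hx : x ≠ 0) :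
    HasGradientAt (fun y : EuclideanSpace ℝ ι => -(y i) / (2 * ‖y‖ ^ 2))
      ((x i * (‖x‖ ^ 4)⁻¹) • x - (2 * ‖x‖ ^ 2)⁻¹ • EuclideanSpace.single i 1) x := by
  have h := hasGradientAt_mul (hasGradientAt_mul (hasGradientAt_const x (-1 : ℝ))
    (hasGradientAt_coord i x)) (hasGradientAt_inv_two_mul_norm_sq hx)
  convert! h using 1
  · ext y
    ring
  · module

lemma contDiffAt_neg_coord_div_norm_sq {ι : Type*} [Fintype ι] {n : WithTop ℕ∞} (i : ι)
    {x : EuclideanSpace ℝ ι} (hx : x ≠ 0) :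
    ContDiffAt ℝ n (fun y : EuclideanSpace ℝ ι => -(y i) / (2 * ‖y‖ ^ 2)) x := by
  have hnorm := contDiffAt_norm ℝ hx (n := n)
  have hx' : 2 * ‖x‖ ^ 2 ≠ 0 := by simpa using hx
  fun_prop (disch := assumption)

lemma lap_neg_coord_div_norm_sq (i : Fin 2) {x : E2} (hx : x ≠ 0) :
    lap (fun y : E2 => -(y i) / (2 * ‖y‖ ^ 2)) x = 0 := by
  have hgrad : ∇ (fun y : E2 => -(y i) / (2 * ‖y‖ ^ 2)) =ᶠ[𝓝 x] fun y =>
      (y i * (‖y‖ ^ 4)⁻¹) • y - (2 * ‖y‖ ^ 2)⁻¹ • EuclideanSpace.single i 1 :=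
    (isOpen_ne.eventually_mem hx).mono fun y hy =>
      (hasGradientAt_neg_coord_div_norm_sq i hy).gradient
  have hcoeff : DifferentiableAt ℝ (fun y : E2 => y i * (‖y‖ ^ 4)⁻¹) x := by
    have hnorm := (contDiffAt_norm ℝ hx (n := 1)).differentiableAt one_ne_zero
    have hx' : ‖x‖ ^ 4 ≠ 0 := by simpa using hx
    fun_prop (disch := assumption)
  have heuler : ⟪∇ (fun y : E2 => y i * (‖y‖ ^ 4)⁻¹) x, x⟫ =
      (-3 : ℤ) * (x i * (‖x‖ ^ 4)⁻¹) :=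
    inner_gradient_self_of_homogeneous hcoeff fun s hs => by
      simp only [PiLp.smul_apply, smul_eq_mul, norm_smul, norm_eq_abs, abs_of_pos hs, zpow_neg,
        zpow_ofNat]
      field_simp
  have hinv := hasGradientAt_inv_two_mul_norm_sq hx
  rw [lap_eq_divergence_gradient
      ((contDiffAt_gradient (contDiffAt_neg_coord_div_norm_sq i hx)
        one_add_one_eq_two.le).differentiableAt one_ne_zero),
    divergence, hgrad.fderiv_eq, ← divergence,
    divergence_sub (hcoeff.fun_smul differentiableAt_fun_id)
      (hinv.differentiableAt.fun_smul (differentiableAt_const _)),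
    divergence_smul hcoeff differentiableAt_fun_id, divergence_smul hinv.differentiableAt
      (differentiableAt_const _), heuler, divergence_id, divergence_const, hinv.gradient]
  simp only [finrank_euclideanSpace, Fintype.card_fin, EuclideanSpace.inner_single_right,
    conj_trivial, PiLp.smul_apply, smul_eq_mul, mul_zero, zero_add, Int.cast_neg,
    Int.cast_ofNat, Nat.cast_ofNat]
  ring

lemma inner_gradient_sub_gradient_eq_two_mul_dw (i : Fin 2) {y : E2} (hy : ‖y‖ = 1) :
    ⟪∇ (fun z : E2 => -(z i) / 2) y - ∇ (fun z : E2 => -(z i) / (2 * ‖z‖ ^ 2)) y, y⟫ =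
      2 * dw i y := by
  have hy₀ : y ≠ 0 := norm_ne_zero_iff.1 (hy ▸ one_ne_zero)
  rw [(hasGradientAt_neg_coord_div_two i y).gradient,
    (hasGradientAt_neg_coord_div_norm_sq i hy₀).gradient, dw, if_pos hy.le]
  simp only [inner_sub_left, real_inner_smul_left, real_inner_self_eq_norm_sq, hy,
    EuclideanSpace.inner_single_left, conj_trivial]
  ring

lemma dw_eq_div_max (i : Fin 2) (y : E2) : dw i y = -(y i) / (2 * max 1 ‖y‖ ^ 2) := by
  rcases le_or_gt ‖y‖ 1 with hy | hy
  · rw [dw, if_pos hy, max_eq_left hy, one_pow, mul_one]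
  · rw [dw, if_neg hy.not_ge, max_eq_right hy.le]

lemma continuous_dw (i : Fin 2) : Continuous (dw i) := by
  rw [funext (dw_eq_div_max i)]
  exact Continuous.div (by fun_prop) (by fun_prop) fun y => by positivity

lemma abs_dw_le_half (i : Fin 2) (y : E2) : |dw i y| ≤ 1 / 2 := by
  have hm : 1 ≤ max 1 ‖y‖ := le_max_left _ _
  have hy : |y i| ≤ max 1 ‖y‖ := (PiLp.norm_apply_le y i).trans (le_max_right _ _)
  rw [dw_eq_div_max, abs_div, abs_neg, abs_of_pos (by positivity : 0 < 2 * max 1 ‖y‖ ^ 2),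
    div_le_div_iff₀ (by positivity) two_pos]
  linarith [le_self_pow₀ hm two_ne_zero]

lemma neg_integral_dw_mul_lap (i : Fin 2) {φ : E2 → ℝ} (hφ : ContDiff ℝ 2 φ)
    (hφc : HasCompactSupport φ) :
    -(∫ y, dw i y * lap φ y) = 2 * ∫ y in sphere (0 : E2) 1, dw i y * φ y ∂μH[1] := by
  have hne {y : E2} (hy : 1 ≤ ‖y‖) : y ≠ 0 := norm_pos_iff.1 (one_pos.trans_le hy)
  have hjump := neg_integral_ite_norm_le_mul_lap zero_le_one (u := fun y => -(y i) / 2)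
    (v := fun y => -(y i) / (2 * ‖y‖ ^ 2)) (fun y _ => by fun_prop)
    (fun y _ => lap_neg_coord_div_two i y)
    (fun y hy => contDiffAt_neg_coord_div_norm_sq i (hne hy))
    (fun y hy => lap_neg_coord_div_norm_sq i (hne hy)) (fun y hy => by simp [hy]) hφ hφc
  refine hjump.trans ?_
  rw [integral_sphere_hausdorffMeasure ((continuous_dw i).fun_mul hφ.continuous),
    ← intervalIntegral.integral_const_mul, flux]
  refine intervalIntegral.integral_congr fun t _ => ?_
  simp only [one_smul, real_inner_smul_left,
    inner_gradient_sub_gradient_eq_two_mul_dw i (norm_unitNormal t)]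
  ring

end Profile

theorem stmt13_general (i : Fin 2) :
    (∃ C : ℝ, ∀ y, |dw i y| ≤ C) ∧ Continuous (dw i) ∧
    (∀ φ : E2 → ℝ, ContDiff ℝ 2 φ → HasCompactSupport φ →
      -(∫ y, dw i y * lap φ y) = 2 * ∫ y in sphere (0 : E2) 1, dw i y * φ y ∂μH[1]) :=
  ⟨⟨1 / 2, abs_dw_le_half i⟩, continuous_dw i, fun _ => neg_integral_dw_mul_lap i⟩

/-- the functions `∂w/∂y_i` are bounded, continuous, and are
distributional solutions of the linearized equation `−Δv = 2 v δ_{|y|=1}`. -/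
theorem stmt13 (i : Fin 2) :
    (∃ C : ℝ, ∀ y, |dw i y| ≤ C) ∧ Continuous (dw i) ∧
    (∀ φ : E2 → ℝ, ContDiff ℝ (⊤ : ℕ∞) φ → HasCompactSupport φ →
      -(∫ y, dw i y * lap φ y) = 2 * ∫ y in sphere (0 : E2) 1, dw i y * φ y ∂μH[1]) :=
  let ⟨hbdd, hcont, hdistrib⟩ := stmt13_general i
  ⟨hbdd, hcont, fun φ hφ => hdistrib φ (contDiff_infty.1 hφ 2)⟩
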